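/- arXiv:2306.04327 — 2 statements merged into one kernel-verified Lean document; each statement's English description precedes it below -/
import Mathlib

section
/- Let $G$ be a connected finite undirected graph on vertices $\{1, \dots, n\}$, let $v \in \{1,\dots,n\}$, and for $x > 0$ let $\tilde{L}(x)$ be the perturbed Laplacian obtained by attaching pendant vertex $n+1$ to $v$ with edge weight $x$. Let $\Phi^* \in \mathbb{R}^{n+1}$ be the unit vector with $\Phi^*(i) = -1/\sqrt{n(n+1)}$ for $i \le n$ and $\Phi^*(n+1) = n/\sqrt{n(n+1)}$. Then for every $\varepsilon > 0$ there exists $\delta > 0$ such that for every $x \in (0, \delta)$ and every unit eigenvector $\Phi$ of $\tilde{L}(x)$ for its second smallest eigenvalue with $\Phi(n+1) \ge 0$, one has $\|\Phi - \Phi^*\|_2 < \varepsilon$. -/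
open Matrix BigOperators

/-- The Laplacian of the graph obtained from a graph `G` on `Fin n` by attaching a new pendant
vertex (the vertex `Fin.last n` of `Fin (n+1)`) to the vertex `v` by an edge of weight `x`:
`L̃(x) = [[L, 0], [0, 0]] + x (e_v - e_{n+1})(e_v - e_{n+1})ᵀ`. -/
noncomputable def pertLap (n : ℕ) (G : SimpleGraph (Fin n)) [DecidableRel G.Adj] (v : Fin n)
    (x : ℝ) : Matrix (Fin (n+1)) (Fin (n+1)) ℝ :=
  Matrix.reindex finSumFinEquiv finSumFinEquiv
      (Matrix.fromBlocks (G.lapMatrix ℝ) 0 0 0) +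
    x • Matrix.vecMulVec
      (fun i => if i = Fin.castSucc v then 1 else if i = Fin.last n then -1 else 0)
      (fun i => if i = Fin.castSucc v then 1 else if i = Fin.last n then -1 else 0)

/-!
The vector `Φ*` is orthogonal to the constants and has Rayleigh quotient `x * (n + 1) / n`, which
therefore bounds the second eigenvalue from above. The Dirichlet energy on `G` of a unit second
eigenvector `Φ` is then `O(x)`, so by a Poincaré inequality on the connected graph `G` the entries
of `Φ` on `G` are within `O(√x)` of their mean. Since the entries of `Φ` sum to zero, the vector
with these entries replaced by their mean is a multiple of `Φ*`; as `Φ` and `Φ*` are unit vectors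
with nonnegative inner product, closeness of `Φ` to the line `ℝ Φ*` is closeness to `Φ*` itself.
-/

section Poincare

variable {V : Type*} {G : SimpleGraph V}

lemma dist_le_length_mul_of_walk {α : Type*} [PseudoMetricSpace α] {f : V → α} {s : ℝ}
    (hf : ∀ i j, G.Adj i j → dist (f i) (f j) ≤ s) {u w : V} (p : G.Walk u w) :
    dist (f u) (f w) ≤ p.length * s := by
  induction p with
  | nil => simp
  | @cons u v w huv p ih =>
    calc dist (f u) (f w) ≤ dist (f u) (f v) + dist (f v) (f w) := dist_triangle _ _ _
      _ ≤ s + p.length * s := add_le_add (hf u v huv) ih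
      _ = (p.length + 1 : ℕ) * s := by push_cast; ring

variable [Fintype V] [DecidableEq V] [DecidableRel G.Adj]

lemma sq_sub_le_two_mul_lapMatrix_of_adj (f : V → ℝ) {i j : V} (hij : G.Adj i j) :
    (f i - f j) ^ 2 ≤ 2 * (f ⬝ᵥ G.lapMatrix ℝ *ᵥ f) := by
  have henergy : 2 * (f ⬝ᵥ G.lapMatrix ℝ *ᵥ f) =
      ∑ a, ∑ b, if G.Adj a b then (f a - f b) ^ 2 else 0 := by
    rw [← toLinearMap₂'_apply', G.lapMatrix_toLinearMap₂' ℝ]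
    ring
  have hterm (a b : V) : 0 ≤ if G.Adj a b then (f a - f b) ^ 2 else 0 := by positivity
  calc (f i - f j) ^ 2 = if G.Adj i j then (f i - f j) ^ 2 else 0 := (if_pos hij).symm
    _ ≤ ∑ b, if G.Adj i b then (f i - f b) ^ 2 else 0 :=
      Finset.single_le_sum (f := fun b => if G.Adj i b then (f i - f b) ^ 2 else 0)
        (fun b _ => hterm i b) (Finset.mem_univ j)
    _ ≤ ∑ a, ∑ b, if G.Adj a b then (f a - f b) ^ 2 else 0 :=
      Finset.single_le_sum (f := fun a => ∑ b, if G.Adj a b then (f a - f b) ^ 2 else 0)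
        (fun a _ => Finset.sum_nonneg fun b _ => hterm a b) (Finset.mem_univ i)
    _ = 2 * (f ⬝ᵥ G.lapMatrix ℝ *ᵥ f) := henergy.symm

lemma abs_sub_le_card_mul_sqrt_lapMatrix (hG : G.Connected) (f : V → ℝ) (u w : V) :
    |f u - f w| ≤ Fintype.card V * √(2 * (f ⬝ᵥ G.lapMatrix ℝ *ᵥ f)) := by
  obtain ⟨p, hp⟩ := hG.exists_isPath u w
  have hedge (i j : V) (hij : G.Adj i j) :
      dist (f i) (f j) ≤ √(2 * (f ⬝ᵥ G.lapMatrix ℝ *ᵥ f)) :=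
    Real.abs_le_sqrt (sq_sub_le_two_mul_lapMatrix_of_adj f hij)
  calc |f u - f w| ≤ p.length * √(2 * (f ⬝ᵥ G.lapMatrix ℝ *ᵥ f)) :=
        dist_le_length_mul_of_walk hedge p
    _ ≤ Fintype.card V * √(2 * (f ⬝ᵥ G.lapMatrix ℝ *ᵥ f)) := by
      gcongr
      exact hp.length_lt.le

lemma sum_sq_sub_expect_le_lapMatrix (hG : G.Connected) (f : V → ℝ) :
    ∑ i, (f i - 𝔼 j, f j) ^ 2 ≤ 2 * Fintype.card V ^ 3 * (f ⬝ᵥ G.lapMatrix ℝ *ᵥ f) := by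
  have := hG.nonempty
  set Q := f ⬝ᵥ G.lapMatrix ℝ *ᵥ f
  have hQ : 0 ≤ Q := (G.posSemidef_lapMatrix ℝ).dotProduct_mulVec_nonneg f
  have hdev (i : V) : |f i - 𝔼 j, f j| ≤ Fintype.card V * √(2 * Q) :=
    calc |f i - 𝔼 j, f j| = |𝔼 j, (f i - f j)| := by
          rw [Finset.expect_sub_distrib, Fintype.expect_const]
      _ ≤ 𝔼 j, |f i - f j| := Finset.abs_expect_le _ _
      _ ≤ Fintype.card V * √(2 * Q) :=
        Finset.expect_le Finset.univ_nonempty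
          fun j _ => abs_sub_le_card_mul_sqrt_lapMatrix hG f i j
  calc ∑ i, (f i - 𝔼 j, f j) ^ 2 ≤ ∑ _i : V, (Fintype.card V * √(2 * Q)) ^ 2 :=
        Finset.sum_le_sum fun i _ => sq_le_sq' (abs_le.mp (hdev i)).1 (abs_le.mp (hdev i)).2
    _ = 2 * Fintype.card V ^ 3 * Q := by
      rw [Finset.sum_const, Finset.card_univ, nsmul_eq_mul, mul_pow, Real.sq_sqrt (by positivity)]
      ring

end Poincare

section Spectral

lemma exists_perm_comp_eq_of_map_univ_eq {ι α : Type*} [Fintype ι] {f g : ι → α}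
    (h : Finset.univ.val.map f = Finset.univ.val.map g) : ∃ σ : Equiv.Perm ι, f ∘ σ = g := by
  classical
  have hfiber (c : α) : Nonempty ({i // g i = c} ≃ {i // f i = c}) := by
    refine ⟨Fintype.equivOfCardEq ?_⟩
    have hcount := congrArg (Multiset.count c) h.symm
    simp only [Multiset.count_map, eq_comm (a := c)] at hcount
    rw [Fintype.card_subtype, Fintype.card_subtype]
    exact hcount
  exact ⟨Equiv.ofFiberEquiv fun c => (hfiber c).some, funext (Equiv.ofFiberEquiv_map _)⟩

variable {ι 𝕜 : Type*} [Fintype ι]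

lemma exists_orthonormalBasis_mulVec_eq_smul [DecidableEq ι] [RCLike 𝕜] {A : Matrix ι ι 𝕜}
    (hA : A.IsHermitian) {μ : ι → 𝕜} (hμ : A.charpoly.roots = Finset.univ.val.map μ) :
    ∃ b : OrthonormalBasis ι 𝕜 (EuclideanSpace 𝕜 ι), ∀ i, A *ᵥ (b i).ofLp = μ i • (b i).ofLp := by
  rw [hA.roots_charpoly_eq_eigenvalues] at hμ
  obtain ⟨σ, rfl⟩ := exists_perm_comp_eq_of_map_univ_eq hμ
  refine ⟨hA.eigenvectorBasis.reindex σ.symm, fun i => ?_⟩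
  rw [OrthonormalBasis.reindex_apply, Equiv.symm_symm, hA.mulVec_eigenvectorBasis,
    RCLike.real_smul_eq_coe_smul (K := 𝕜)]
  rfl

lemma dotProduct_eq_zero_of_mulVec_eq_smul {R : Type*} [CommRing R] [NoZeroDivisors R]
    {A : Matrix ι ι R} (hA : A.IsSymm) {u w : ι → R} {a c : R} (hu : A *ᵥ u = a • u)
    (hw : A *ᵥ w = c • w) (hac : a ≠ c) : u ⬝ᵥ w = 0 := by
  have h : a * (u ⬝ᵥ w) = c * (u ⬝ᵥ w) :=
    calc a * (u ⬝ᵥ w) = w ⬝ᵥ A *ᵥ u := by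
          rw [hu, dotProduct_smul, smul_eq_mul, dotProduct_comm]
      _ = u ⬝ᵥ A *ᵥ w := by rw [← dotProduct_transpose_mulVec, hA.eq]
      _ = c * (u ⬝ᵥ w) := by rw [hw, dotProduct_smul, smul_eq_mul]
  exact (mul_eq_mul_right_iff.mp h).resolve_left hac

lemma dotProduct_eq_sum_orthonormalBasis (b : OrthonormalBasis ι ℝ (EuclideanSpace ℝ ι))
    (y z : ι → ℝ) : y ⬝ᵥ z = ∑ i, (y ⬝ᵥ (b i).ofLp) * (z ⬝ᵥ (b i).ofLp) := by
  simpa [EuclideanSpace.inner_eq_star_dotProduct, dotProduct_comm, mul_comm] using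
    (b.sum_inner_mul_inner (WithLp.toLp 2 y) (WithLp.toLp 2 z)).symm

lemma orthonormalBasis_dotProduct [DecidableEq ι]
    (b : OrthonormalBasis ι ℝ (EuclideanSpace ℝ ι)) (i j : ι) :
    (b i).ofLp ⬝ᵥ (b j).ofLp = if i = j then 1 else 0 := by
  simpa [EuclideanSpace.inner_eq_star_dotProduct, eq_comm] using
    orthonormal_iff_ite.mp b.orthonormal j i

variable {A : Matrix ι ι ℝ} {μ : ι → ℝ} {b : OrthonormalBasis ι ℝ (EuclideanSpace ℝ ι)}

lemma eigenvalue_nonneg_of_posSemidef (hA : A.PosSemidef)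
    (hb : ∀ i, A *ᵥ (b i).ofLp = μ i • (b i).ofLp) (i : ι) : 0 ≤ μ i := by
  classical
  simpa [hb, orthonormalBasis_dotProduct] using hA.dotProduct_mulVec_nonneg (b i).ofLp

lemma exists_eigenvalue_eq (hA : A.IsSymm) (hb : ∀ i, A *ᵥ (b i).ofLp = μ i • (b i).ofLp)
    {u : ι → ℝ} (hu : u ≠ 0) {a : ℝ} (hAu : A *ᵥ u = a • u) : ∃ i, μ i = a := by
  by_contra! hne
  have horth (i : ι) : u ⬝ᵥ (b i).ofLp = 0 :=
    dotProduct_eq_zero_of_mulVec_eq_smul hA hAu (hb i) (hne i).symm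
  refine hu (dotProduct_self_eq_zero.mp ?_)
  simp [dotProduct_eq_sum_orthonormalBasis b u u, horth]

lemma eq_of_eigenvalue_eq_of_eigenspace_le_span (hb : ∀ i, A *ᵥ (b i).ofLp = μ i • (b i).ofLp)
    {u : ι → ℝ} {a : ℝ} (hspan : ∀ y, A *ᵥ y = a • y → y ∈ Submodule.span ℝ {u})
    {i j : ι} (hi : μ i = a) (hj : μ j = a) : i = j := by
  classical
  by_contra hij
  obtain ⟨c, hc⟩ := Submodule.mem_span_singleton.mp (hspan (b i).ofLp (hi ▸ hb i))
  obtain ⟨d, hd⟩ := Submodule.mem_span_singleton.mp (hspan (b j).ofLp (hj ▸ hb j))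
  have hii : c * (c * (u ⬝ᵥ u)) = 1 := by
    simpa [← hc] using orthonormalBasis_dotProduct b i i
  have hjj : d * (d * (u ⬝ᵥ u)) = 1 := by
    simpa [← hd] using orthonormalBasis_dotProduct b j j
  have horth : c * (d * (u ⬝ᵥ u)) = 0 := by
    rw [← smul_eq_mul d, ← dotProduct_smul, ← smul_eq_mul, ← smul_dotProduct, hc, hd,
      orthonormalBasis_dotProduct, if_neg hij]
  have : (1 : ℝ) = 0 := by
    linear_combination (c * d * (u ⬝ᵥ u)) * horth - hii * (d * (d * (u ⬝ᵥ u))) - hjj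
  exact one_ne_zero this

lemma mul_dotProduct_self_le_of_forall_lt (hA : A.IsSymm)
    (hb : ∀ i, A *ᵥ (b i).ofLp = μ i • (b i).ofLp) {a : ℝ} {w : ι → ℝ}
    (hw : ∀ i, μ i < a → w ⬝ᵥ (b i).ofLp = 0) : a * (w ⬝ᵥ w) ≤ w ⬝ᵥ A *ᵥ w := by
  have hAw (i : ι) : (A *ᵥ w) ⬝ᵥ (b i).ofLp = μ i * (w ⬝ᵥ (b i).ofLp) := by
    rw [dotProduct_comm, ← dotProduct_transpose_mulVec, hA.eq, hb, dotProduct_smul, smul_eq_mul]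
  rw [dotProduct_eq_sum_orthonormalBasis b w w, dotProduct_eq_sum_orthonormalBasis b w (A *ᵥ w),
    Finset.mul_sum]
  refine Finset.sum_le_sum fun i _ => ?_
  obtain hi | hi := lt_or_ge (μ i) a
  · simp [hw i hi]
  · calc a * ((w ⬝ᵥ (b i).ofLp) * (w ⬝ᵥ (b i).ofLp))
          ≤ μ i * ((w ⬝ᵥ (b i).ofLp) * (w ⬝ᵥ (b i).ofLp)) :=
        mul_le_mul_of_nonneg_right hi (mul_self_nonneg _)
      _ = (w ⬝ᵥ (b i).ofLp) * ((A *ᵥ w) ⬝ᵥ (b i).ofLp) := by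
        rw [hAw]
        ring

end Spectral

section SecondEigenvalue

variable {n : ℕ} {A : Matrix (Fin (n + 1)) (Fin (n + 1)) ℝ} {μ u : Fin (n + 1) → ℝ}

lemma first_eigenvalue_eq_zero (hA : A.PosSemidef) (hμ : Monotone μ)
    (hroots : A.charpoly.roots = Finset.univ.val.map μ) (hu : u ≠ 0) (hAu : A *ᵥ u = 0) :
    μ 0 = 0 := by
  obtain ⟨b, hb⟩ := exists_orthonormalBasis_mulVec_eq_smul hA.isHermitian hroots
  obtain ⟨i, hi⟩ := exists_eigenvalue_eq (isHermitian_iff_isSymm.mp hA.isHermitian) hb hu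
    (hAu.trans (zero_smul ℝ u).symm)
  exact le_antisymm (hi ▸ hμ (Fin.zero_le i)) (eigenvalue_nonneg_of_posSemidef hA hb 0)

lemma second_eigenvalue_pos (hn : n ≠ 0) (hA : A.PosSemidef) (hμ : Monotone μ)
    (hroots : A.charpoly.roots = Finset.univ.val.map μ) (hu : u ≠ 0)
    (hker : ∀ y, A *ᵥ y = 0 ↔ y ∈ Submodule.span ℝ {u}) : 0 < μ 1 := by
  have hμ0 : μ 0 = 0 :=
    first_eigenvalue_eq_zero hA hμ hroots hu ((hker u).mpr (Submodule.mem_span_singleton_self u))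
  obtain ⟨b, hb⟩ := exists_orthonormalBasis_mulVec_eq_smul hA.isHermitian hroots
  refine (eigenvalue_nonneg_of_posSemidef hA hb 1).lt_of_ne' fun hμ1 => ?_
  have h10 : (1 : Fin (n + 1)) = 0 :=
    eq_of_eigenvalue_eq_of_eigenspace_le_span hb
      (fun y hy => (hker y).mp (hy.trans (zero_smul ℝ y))) hμ1 hμ0
  exact hn (by simpa using h10)

lemma second_eigenvalue_mul_dotProduct_self_le (hA : A.PosSemidef) (hμ : Monotone μ)
    (hroots : A.charpoly.roots = Finset.univ.val.map μ) (hu : u ≠ 0)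
    (hker : ∀ y, A *ᵥ y = 0 ↔ y ∈ Submodule.span ℝ {u}) {w : Fin (n + 1) → ℝ}
    (hw : w ⬝ᵥ u = 0) : μ 1 * (w ⬝ᵥ w) ≤ w ⬝ᵥ A *ᵥ w := by
  have hμ0 : μ 0 = 0 :=
    first_eigenvalue_eq_zero hA hμ hroots hu ((hker u).mpr (Submodule.mem_span_singleton_self u))
  obtain ⟨b, hb⟩ := exists_orthonormalBasis_mulVec_eq_smul hA.isHermitian hroots
  refine mul_dotProduct_self_le_of_forall_lt (isHermitian_iff_isSymm.mp hA.isHermitian) hb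
    fun i hi => ?_
  obtain rfl : i = 0 := by
    by_contra hi0
    exact (hμ (Fin.one_le_of_ne_zero hi0)).not_gt hi
  obtain ⟨c, hc⟩ := Submodule.mem_span_singleton.mp
    ((hker (b 0).ofLp).mp (by rw [hb, hμ0, zero_smul]))
  rw [← hc, dotProduct_smul, hw, smul_zero]

end SecondEigenvalue

section PertLap

variable {n : ℕ} (G : SimpleGraph (Fin n)) [DecidableRel G.Adj] (v : Fin n) {x : ℝ}

lemma dotProduct_pertLap_mulVec (x : ℝ) (y : Fin (n + 1) → ℝ) :
    y ⬝ᵥ pertLap n G v x *ᵥ y =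
      (y ∘ Fin.castSucc) ⬝ᵥ G.lapMatrix ℝ *ᵥ (y ∘ Fin.castSucc) +
        x * (y v.castSucc - y (Fin.last n)) ^ 2 := by
  have hedge : (fun i => if i = v.castSucc then 1 else if i = Fin.last n then -1 else 0) ⬝ᵥ y =
      y v.castSucc - y (Fin.last n) := by
    simp [dotProduct, Fin.sum_univ_castSucc, (Fin.castSucc_ne_last _).symm, sub_eq_add_neg]
  have hinl : (y ∘ finSumFinEquiv) ∘ Sum.inl = y ∘ Fin.castSucc := rfl
  rw [pertLap, add_mulVec, dotProduct_add]
  congr 1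
  · rw [reindex_apply, submatrix_mulVec_equiv, Equiv.symm_symm, dotProduct_comp_equiv_symm,
      fromBlocks_mulVec, ← Sum.elim_comp_inl_inr (y ∘ finSumFinEquiv), sumElim_dotProduct_sumElim]
    simp [hinl]
  · rw [smul_mulVec, vecMulVec_mulVec, hedge, dotProduct_smul, dotProduct_smul,
      dotProduct_comm y, hedge, op_smul_eq_smul, smul_eq_mul, smul_eq_mul, sq]

lemma posSemidef_pertLap (hx : 0 ≤ x) : (pertLap n G v x).PosSemidef := by
  have hL := G.posSemidef_lapMatrix ℝ
  refine .of_dotProduct_mulVec_nonneg (.add ?_ ?_) fun y => ?_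
  · exact (hL.isHermitian.fromBlocks (by simp) (by simp)).submatrix _
  · ext i j
    simp [vecMulVec_apply, mul_comm]
  · rw [star_trivial, dotProduct_pertLap_mulVec]
    have := hL.dotProduct_mulVec_nonneg (y ∘ Fin.castSucc)
    rw [star_trivial] at this
    positivity

variable {G}

lemma pertLap_mulVec_eq_zero_iff (hG : G.Connected) (hx : 0 < x) (y : Fin (n + 1) → ℝ) :
    pertLap n G v x *ᵥ y = 0 ↔ y ∈ Submodule.span ℝ {1} := by
  have hA := posSemidef_pertLap G v hx.le
  have hL := G.posSemidef_lapMatrix ℝ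
  rw [← hA.dotProduct_mulVec_zero_iff, star_trivial, dotProduct_pertLap_mulVec,
    Submodule.mem_span_singleton]
  constructor
  · intro h
    obtain ⟨hQ, hv⟩ := (add_eq_zero_iff_of_nonneg
      (hL.dotProduct_mulVec_nonneg (y ∘ Fin.castSucc)) (by positivity)).mp h
    have hconst := (G.lapMatrix_mulVec_eq_zero_iff_forall_reachable).mp
      ((hL.dotProduct_mulVec_zero_iff _).mp hQ)
    have hlast : y v.castSucc = y (Fin.last n) := by
      simpa [hx.ne', sub_eq_zero] using hv
    refine ⟨y (Fin.last n), funext fun i => ?_⟩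
    induction i using Fin.lastCases with
    | last => simp
    | cast i => simpa [← hlast] using hconst v i (hG.preconnected v i)
  · rintro ⟨c, rfl⟩
    have hconst : G.lapMatrix ℝ *ᵥ ((c • (1 : Fin (n + 1) → ℝ)) ∘ Fin.castSucc) = 0 :=
      G.lapMatrix_mulVec_eq_zero_iff_forall_adj.mpr fun _ _ _ => rfl
    simp [hconst]

end PertLap

section Limit

lemma norm_sub_sq_le_two_mul_norm_sub_smul_sq {E : Type*} [NormedAddCommGroup E]
    [InnerProductSpace ℝ E] {u e : E} (hu : ‖u‖ = 1) (he : ‖e‖ = 1) (hue : 0 ≤ inner ℝ u e)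
    (t : ℝ) : ‖u - e‖ ^ 2 ≤ 2 * ‖u - t • e‖ ^ 2 := by
  have hue1 : inner ℝ u e ≤ 1 := by simpa [hu, he] using real_inner_le_norm u e
  -- With `r = ⟪u, e⟫ ∈ [0, 1]`: `2 - 2 * r ≤ 2 * (1 - r ^ 2) ≤ 2 * (1 - r ^ 2 + (t - r) ^ 2)`.
  rw [norm_sub_sq_real, norm_sub_sq_real, inner_smul_right, norm_smul, hu, he, mul_one,
    Real.norm_eq_abs, sq_abs]
  nlinarith [sq_nonneg (t - inner ℝ u e), mul_nonneg hue (sub_nonneg.mpr hue1)]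

/-- The limit `Φ*` of the Fiedler vectors as the weight of the pendant edge tends to `0`: the unit
vector orthogonal to the constants that is constant on the vertices of the original graph and
positive at the pendant vertex `Fin.last n`. -/
noncomputable def pendantFiedlerLimit (n : ℕ) : Fin (n + 1) → ℝ := fun i =>
  if i = Fin.last n then n / √(n * (n + 1)) else -1 / √(n * (n + 1))

@[simp]
lemma pendantFiedlerLimit_last (n : ℕ) :
    pendantFiedlerLimit n (Fin.last n) = n / √(n * (n + 1)) := if_pos rfl

@[simp]
lemma pendantFiedlerLimit_castSucc {n : ℕ} (i : Fin n) :
    pendantFiedlerLimit n i.castSucc = -1 / √(n * (n + 1)) := if_neg i.castSucc_ne_last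

lemma pendantFiedlerLimit_dotProduct_one (n : ℕ) : pendantFiedlerLimit n ⬝ᵥ 1 = 0 := by
  simp only [dotProduct_one, Fin.sum_univ_castSucc, pendantFiedlerLimit_castSucc,
    pendantFiedlerLimit_last, Finset.sum_const, Finset.card_univ, Fintype.card_fin, nsmul_eq_mul]
  ring

variable {n : ℕ}

lemma pendantFiedlerLimit_dotProduct_self (hn : n ≠ 0) :
    pendantFiedlerLimit n ⬝ᵥ pendantFiedlerLimit n = 1 := by
  have hr : √((n : ℝ) * (n + 1)) ^ 2 = n * (n + 1) := Real.sq_sqrt (by positivity)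
  simp only [dotProduct, Fin.sum_univ_castSucc, pendantFiedlerLimit_castSucc,
    pendantFiedlerLimit_last, Finset.sum_const, Finset.card_univ, Fintype.card_fin, nsmul_eq_mul]
  field_simp
  rw [hr]
  ring

lemma pendantFiedlerLimit_dotProduct_pertLap_mulVec (G : SimpleGraph (Fin n)) [DecidableRel G.Adj]
    (v : Fin n) (x : ℝ) :
    pendantFiedlerLimit n ⬝ᵥ pertLap n G v x *ᵥ pendantFiedlerLimit n = x * (n + 1) / n := by
  have hn : (0 : ℝ) < n := by exact_mod_cast v.pos
  have hr : √((n : ℝ) * (n + 1)) ^ 2 = n * (n + 1) := Real.sq_sqrt (by positivity)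
  have hconst : G.lapMatrix ℝ *ᵥ (pendantFiedlerLimit n ∘ Fin.castSucc) = 0 :=
    G.lapMatrix_mulVec_eq_zero_iff_forall_adj.mpr fun _ _ _ => by simp
  rw [dotProduct_pertLap_mulVec, hconst, dotProduct_zero, zero_add, pendantFiedlerLimit_castSucc,
    pendantFiedlerLimit_last, ← sub_div, div_pow, hr]
  field_simp
  ring

lemma dotProduct_pendantFiedlerLimit {Φ : Fin (n + 1) → ℝ} (hsum : ∑ i, Φ i = 0) :
    Φ ⬝ᵥ pendantFiedlerLimit n = (n + 1) * Φ (Fin.last n) / √(n * (n + 1)) := by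
  rw [Fin.sum_univ_castSucc] at hsum
  simp only [dotProduct, Fin.sum_univ_castSucc, pendantFiedlerLimit_castSucc,
    pendantFiedlerLimit_last, ← Finset.sum_mul, eq_neg_of_add_eq_zero_left hsum]
  ring

lemma exists_mul_pendantFiedlerLimit_eq_expect (hn : n ≠ 0) {Φ : Fin (n + 1) → ℝ}
    (hsum : ∑ i, Φ i = 0) :
    ∃ t : ℝ, (∀ i : Fin n, t * pendantFiedlerLimit n i.castSucc = 𝔼 j : Fin n, Φ j.castSucc) ∧
      t * pendantFiedlerLimit n (Fin.last n) = Φ (Fin.last n) := by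
  rw [Fin.sum_univ_castSucc] at hsum
  refine ⟨Φ (Fin.last n) * √(n * (n + 1)) / n, fun i => ?_, ?_⟩
  · rw [Fintype.expect_eq_sum_div_card, Fintype.card_fin, eq_neg_of_add_eq_zero_left hsum,
      pendantFiedlerLimit_castSucc]
    field_simp
  · rw [pendantFiedlerLimit_last]
    field_simp

lemma sum_sq_sub_pendantFiedlerLimit_le_sum_sq_sub_expect (hn : n ≠ 0) {Φ : Fin (n + 1) → ℝ}
    (hunit : ∑ i, Φ i ^ 2 = 1) (hsum : ∑ i, Φ i = 0) (hlast : 0 ≤ Φ (Fin.last n)) :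
    ∑ i, (Φ i - pendantFiedlerLimit n i) ^ 2 ≤
      2 * ∑ i : Fin n, (Φ i.castSucc - 𝔼 j : Fin n, Φ j.castSucc) ^ 2 := by
  have hinner : 0 ≤ Φ ⬝ᵥ pendantFiedlerLimit n := by
    rw [dotProduct_pendantFiedlerLimit hsum]
    positivity
  obtain ⟨t, ht, ht_last⟩ := exists_mul_pendantFiedlerLimit_eq_expect hn hsum
  have h := norm_sub_sq_le_two_mul_norm_sub_smul_sq (u := WithLp.toLp 2 Φ)
    (e := WithLp.toLp 2 (pendantFiedlerLimit n)) ?_ ?_ ?_ t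
  · simp only [EuclideanSpace.real_norm_sq_eq, PiLp.sub_apply, PiLp.smul_apply, smul_eq_mul] at h
    rw [Fin.sum_univ_castSucc (fun i => (Φ i - t * pendantFiedlerLimit n i) ^ 2), ht_last,
      sub_self, zero_pow two_ne_zero, add_zero] at h
    simpa only [ht] using h
  · simpa [EuclideanSpace.norm_eq] using hunit
  · simpa [EuclideanSpace.norm_eq, dotProduct, ← sq] using pendantFiedlerLimit_dotProduct_self hn
  · simpa [EuclideanSpace.inner_eq_star_dotProduct, dotProduct_comm] using hinner

end Limit

section Eigenvector

variable {n : ℕ} {G : SimpleGraph (Fin n)} [DecidableRel G.Adj] {v : Fin n} {x : ℝ}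
  {μ : Fin (n + 1) → ℝ}

lemma pertLap_second_eigenvalue_pos (hG : G.Connected) (hx : 0 < x) (hμ : Monotone μ)
    (hroots : (pertLap n G v x).charpoly.roots = Finset.univ.val.map μ) : 0 < μ 1 :=
  second_eigenvalue_pos v.pos.ne' (posSemidef_pertLap G v hx.le) hμ hroots one_ne_zero
    (pertLap_mulVec_eq_zero_iff v hG hx)

lemma pertLap_second_eigenvalue_le (hG : G.Connected) (hx : 0 < x) (hμ : Monotone μ)
    (hroots : (pertLap n G v x).charpoly.roots = Finset.univ.val.map μ) :
    μ 1 ≤ x * (n + 1) / n := by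
  have h := second_eigenvalue_mul_dotProduct_self_le (posSemidef_pertLap G v hx.le) hμ hroots
    one_ne_zero (pertLap_mulVec_eq_zero_iff v hG hx) (pendantFiedlerLimit_dotProduct_one n)
  rwa [pendantFiedlerLimit_dotProduct_self v.pos.ne', mul_one,
    pendantFiedlerLimit_dotProduct_pertLap_mulVec] at h

lemma sum_eq_zero_of_pertLap_mulVec_eq_smul (hG : G.Connected) (hx : 0 < x)
    {Φ : Fin (n + 1) → ℝ} {a : ℝ} (ha : a ≠ 0) (hΦ : pertLap n G v x *ᵥ Φ = a • Φ) :
    ∑ i, Φ i = 0 := by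
  have hker : pertLap n G v x *ᵥ 1 = (0 : ℝ) • 1 := by
    rw [zero_smul, pertLap_mulVec_eq_zero_iff v hG hx]
    exact Submodule.mem_span_singleton_self 1
  rw [← one_dotProduct]
  exact dotProduct_eq_zero_of_mulVec_eq_smul
    (isHermitian_iff_isSymm.mp (posSemidef_pertLap G v hx.le).isHermitian) hker hΦ ha.symm

lemma lapMatrix_le_of_pertLap_mulVec_eq_smul (hx : 0 ≤ x) {Φ : Fin (n + 1) → ℝ} {a : ℝ}
    (hunit : ∑ i, Φ i ^ 2 = 1) (hΦ : pertLap n G v x *ᵥ Φ = a • Φ) :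
    (Φ ∘ Fin.castSucc) ⬝ᵥ G.lapMatrix ℝ *ᵥ (Φ ∘ Fin.castSucc) ≤ a := by
  have hΦΦ : Φ ⬝ᵥ Φ = 1 := by simpa only [dotProduct, ← sq] using hunit
  calc (Φ ∘ Fin.castSucc) ⬝ᵥ G.lapMatrix ℝ *ᵥ (Φ ∘ Fin.castSucc)
      ≤ (Φ ∘ Fin.castSucc) ⬝ᵥ G.lapMatrix ℝ *ᵥ (Φ ∘ Fin.castSucc) +
          x * (Φ v.castSucc - Φ (Fin.last n)) ^ 2 := le_add_of_nonneg_right (by positivity)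
    _ = Φ ⬝ᵥ pertLap n G v x *ᵥ Φ := (dotProduct_pertLap_mulVec G v x Φ).symm
    _ = a := by rw [hΦ, dotProduct_smul, hΦΦ, smul_eq_mul, mul_one]

lemma sum_sq_sub_pendantFiedlerLimit_le (hG : G.Connected) (hx : 0 < x) (hμ : Monotone μ)
    (hroots : (pertLap n G v x).charpoly.roots = Finset.univ.val.map μ) {Φ : Fin (n + 1) → ℝ}
    (hunit : ∑ i, Φ i ^ 2 = 1) (hΦ : pertLap n G v x *ᵥ Φ = μ 1 • Φ) (hlast : 0 ≤ Φ (Fin.last n)) :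
    ∑ i, (Φ i - pendantFiedlerLimit n i) ^ 2 ≤ 4 * n ^ 2 * (n + 1) * x := by
  have hn : (n : ℝ) ≠ 0 := by exact_mod_cast v.pos.ne'
  have hsum : ∑ i, Φ i = 0 := sum_eq_zero_of_pertLap_mulVec_eq_smul hG hx
    (pertLap_second_eigenvalue_pos hG hx hμ hroots).ne' hΦ
  have henergy : (Φ ∘ Fin.castSucc) ⬝ᵥ G.lapMatrix ℝ *ᵥ (Φ ∘ Fin.castSucc) ≤ x * (n + 1) / n :=
    (lapMatrix_le_of_pertLap_mulVec_eq_smul hx.le hunit hΦ).trans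
      (pertLap_second_eigenvalue_le hG hx hμ hroots)
  calc ∑ i, (Φ i - pendantFiedlerLimit n i) ^ 2
      ≤ 2 * ∑ i : Fin n, (Φ i.castSucc - 𝔼 j : Fin n, Φ j.castSucc) ^ 2 :=
        sum_sq_sub_pendantFiedlerLimit_le_sum_sq_sub_expect v.pos.ne' hunit hsum hlast
    _ ≤ 2 * (2 * n ^ 3 *
          ((Φ ∘ Fin.castSucc) ⬝ᵥ G.lapMatrix ℝ *ᵥ (Φ ∘ Fin.castSucc))) := by
        gcongr
        simpa using sum_sq_sub_expect_le_lapMatrix hG (Φ ∘ Fin.castSucc)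
    _ ≤ 2 * (2 * n ^ 3 * (x * (n + 1) / n)) := by gcongr
    _ = 4 * n ^ 2 * (n + 1) * x := by
        field_simp
        ring

end Eigenvector

/-- Let `Φ*` be the unit vector with `Φ*(i) = -1/√(n(n+1))` for `i ≤ n` and
`Φ*(n+1) = n/√(n(n+1))`. For every `ε > 0` there is `δ > 0` such that for every `x ∈ (0, δ)`
and every unit eigenvector `Φ` of `L̃(x)` for its second smallest eigenvalue `μ 1`
(eigenvalues with multiplicity enumerated in increasing order by `μ`) with `Φ(n+1) ≥ 0`,
one has `‖Φ - Φ*‖₂ < ε`. -/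
theorem fiedler_stmt_8 (n : ℕ) (G : SimpleGraph (Fin n)) [DecidableRel G.Adj]
    (hG : G.Connected) (v : Fin n) :
    ∀ ε > (0 : ℝ), ∃ δ > (0 : ℝ), ∀ x : ℝ, 0 < x → x < δ →
      ∀ μ : Fin (n+1) → ℝ, Monotone μ →
        (pertLap n G v x).charpoly.roots = Finset.univ.val.map μ →
        ∀ Φ : Fin (n+1) → ℝ, ∑ i, Φ i ^ 2 = 1 →
          pertLap n G v x *ᵥ Φ = μ 1 • Φ → 0 ≤ Φ (Fin.last n) →
          Real.sqrt (∑ i : Fin (n+1),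
              (Φ i - (if i = Fin.last n then (n : ℝ) / Real.sqrt (n * (n + 1))
                      else -1 / Real.sqrt (n * (n + 1)))) ^ 2) < ε := by
  intro ε hε
  have hn : (0 : ℝ) < n := by exact_mod_cast v.pos
  refine ⟨ε ^ 2 / (4 * n ^ 2 * (n + 1)), by positivity, ?_⟩
  intro x hx hxδ μ hμ hroots Φ hunit hΦ hlast
  rw [Real.sqrt_lt' hε]
  calc ∑ i, (Φ i - pendantFiedlerLimit n i) ^ 2 ≤ 4 * n ^ 2 * (n + 1) * x :=
        sum_sq_sub_pendantFiedlerLimit_le hG hx hμ hroots hunit hΦ hlast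
    _ < ε ^ 2 := by rwa [lt_div_iff₀' (by positivity)] at hxδ
end

section
/- Let $n \ge 2$, let $K_n$ be the complete graph on $\{1, \dots, n\}$, and for $x > 0$ let $\tilde{L}(x)$ be the perturbed Laplacian obtained by attaching pendant vertex $n+1$ to vertex $n$ with edge weight $x$. Let $a_-(x)$ be the smaller root of $p_x(a) = a^2 - a(2x+n-2) + (n-1)(x-1)$ and let $\Phi_x = (-1, \dots, -1, a_-(x), n-1-a_-(x)) \in \mathbb{R}^{n+1}$. Then for every $x > 0$, $\Phi_x$ is an eigenvector of $\tilde{L}(x)$ with eigenvalue $a_-(x) + 1$, the entries of $\Phi_x$ sum to zero, and $\Phi_x(n+1) > \Phi_x(n)$, i.e., the pendant vertex $n+1$ carries a strictly larger value than the attachment vertex $n$. -/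
open Matrix BigOperators

/-!
Write `Φ = (f, n - 1 - a)` with `f = (a + 1) e_v - 1`. Since `L 1 = 0` and `L e_v = n e_v - 1` as
soon as `v` is adjacent to every other vertex, only this property of `Kₙ` matters. Pendant edge
included, `L̃(x) Φ` has the value `-(a + 1)` away from `v` and the pendant vertex, and at each of
these two the eigenvector equation is `p_x(a) = 0`. Finally `p_x((n - 1) / 2) = -(n² - 1) / 4 < 0`,
so the smaller root satisfies `a < (n - 1) / 2`, that is, `a < n - 1 - a`.
-/

lemma lapMatrix_mulVec_single_of_isUniversal {V R : Type*} [Fintype V] [DecidableEq V]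
    [NonAssocRing R] {G : SimpleGraph V} [DecidableRel G.Adj] {v : V} (hv : G.IsUniversal v)
    (c : R) :
    G.lapMatrix R *ᵥ Pi.single v c = Pi.single v (Fintype.card V * c) - fun _ ↦ c := by
  have hdeg : (G.degree v : R) + 1 = Fintype.card V := by
    rw [(G.degree_eq_card_sub_one v).2 hv, Nat.cast_pred (Fintype.card_pos_iff.2 ⟨v⟩),
      sub_add_cancel]
  ext i
  rw [SimpleGraph.lapMatrix_mulVec_apply, Finset.sum_pi_single']
  rcases eq_or_ne i v with rfl | hi
  · simp [← hdeg, add_mul]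
  · simp [hi, (hv hi.symm).symm]

lemma lt_of_monic_quadratic_neg {R : Type*} [CommRing R] [LinearOrder R] [IsStrictOrderedRing R]
    {s p a t : R} (ha : a ^ 2 - a * s + p = 0) (hmin : ∀ b, b ^ 2 - b * s + p = 0 → a ≤ b)
    (ht : t ^ 2 - t * s + p < 0) : a < t := by
  have hroot : a ≤ s - a := hmin (s - a) (by linear_combination ha)
  have hfactor : t ^ 2 - t * s + p = (t - a) * (t - (s - a)) := by linear_combination ha
  by_contra! hle
  exact ht.not_ge (hfactor ▸ mul_nonneg_of_nonpos_of_nonpos (sub_nonpos.2 hle)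
    (sub_nonpos.2 (hle.trans hroot)))

lemma pertLap_mulVec_snoc {n : ℕ} (G : SimpleGraph (Fin n)) [DecidableRel G.Adj] (v : Fin n)
    (x : ℝ) (f : Fin n → ℝ) (t : ℝ) :
    pertLap n G v x *ᵥ (Fin.snoc f t : Fin (n + 1) → ℝ) =
      (Fin.snoc (G.lapMatrix ℝ *ᵥ f + Pi.single v (x * (f v - t))) (x * (t - f v)) :
        Fin (n + 1) → ℝ) := by
  have hedge : (fun i ↦ if i = v.castSucc then (1 : ℝ) else if i = Fin.last n then -1 else 0) =
      (Fin.snoc (Pi.single v 1) (-1) : Fin (n + 1) → ℝ) := by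
    ext i
    cases i using Fin.lastCases <;> simp [Pi.single_apply, (Fin.castSucc_lt_last v).ne']
  have hsplit : (Fin.snoc f t : Fin (n + 1) → ℝ) ∘ finSumFinEquiv =
      Sum.elim f (fun _ : Fin 1 ↦ t) := by
    ext (j | j)
    · exact Fin.snoc_castSucc (α := fun _ ↦ ℝ) ..
    · obtain rfl := Subsingleton.elim j 0
      exact Fin.snoc_last (α := fun _ ↦ ℝ) ..
  have hdot : (Fin.snoc (Pi.single v 1) (-1) : Fin (n + 1) → ℝ) ⬝ᵥ
      (Fin.snoc f t : Fin (n + 1) → ℝ) = f v - t := by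
    simp [dotProduct, Fin.sum_univ_castSucc, Pi.single_apply, sub_eq_add_neg]
  rw [pertLap, hedge, add_mulVec, smul_mulVec, vecMulVec_mulVec, hdot, reindex_apply,
    submatrix_mulVec_equiv, Equiv.symm_symm, hsplit, fromBlocks_mulVec]
  ext i
  cases i using Fin.lastCases with
  | last => simp
  | cast i => simp [Pi.single_apply]

/-- The candidate eigenvector `Φ` of `pertLap n G v x`: `a` at `v`, `n - 1 - a` at the pendant
vertex `Fin.last n` and `-1` elsewhere. For `v` the last vertex of `Fin n` this is the paper's
`(-1, …, -1, a, n - 1 - a)`. Testing for `v` in `ℕ` makes this case hold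
definitionally. -/
def pendantVector {n : ℕ} (v : Fin n) (a : ℝ) : Fin (n + 1) → ℝ := fun i ↦
  if i = Fin.last n then (n : ℝ) - 1 - a else if (i : ℕ) = v then a else -1

lemma pendantVector_eq_snoc {n : ℕ} (v : Fin n) (a : ℝ) :
    pendantVector v a = Fin.snoc (Pi.single v (a + 1) - 1) ((n : ℝ) - 1 - a) := by
  ext i
  cases i using Fin.lastCases with
  | last => simp [pendantVector]
  | cast i =>
    rcases eq_or_ne i v with rfl | hi
    · simp [pendantVector]
    · simp [pendantVector, hi, Fin.val_ne_of_ne hi]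

lemma sum_pendantVector {n : ℕ} (v : Fin n) (a : ℝ) : ∑ i, pendantVector v a i = 0 := by
  rw [pendantVector_eq_snoc, Fin.sum_snoc]
  simp only [Pi.sub_apply, Pi.one_apply, Finset.sum_sub_distrib, Fintype.sum_pi_single',
    Finset.sum_const, Finset.card_univ, Fintype.card_fin, nsmul_eq_mul, mul_one]
  ring

lemma pertLap_mulVec_pendantVector {n : ℕ} {G : SimpleGraph (Fin n)} [DecidableRel G.Adj]
    {v : Fin n} (hv : G.IsUniversal v) {x a : ℝ}
    (ha : a ^ 2 - a * (2 * x + (n : ℝ) - 2) + ((n : ℝ) - 1) * (x - 1) = 0) :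
    pertLap n G v x *ᵥ pendantVector v a = (a + 1) • pendantVector v a := by
  have hlap : G.lapMatrix ℝ *ᵥ (Pi.single v (a + 1) - 1) =
      Pi.single v (n * (a + 1)) - fun _ ↦ a + 1 := by
    have hone : G.lapMatrix ℝ *ᵥ 1 = 0 := G.lapMatrix_mulVec_const_eq_zero
    rw [mulVec_sub, hone, sub_zero, lapMatrix_mulVec_single_of_isUniversal hv, Fintype.card_fin]
  rw [pendantVector_eq_snoc, pertLap_mulVec_snoc, hlap]
  ext i
  cases i using Fin.lastCases with
  | last =>
    simp only [Pi.sub_apply, Pi.single_eq_same, Pi.one_apply, Fin.snoc_last, Pi.smul_apply,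
      smul_eq_mul]
    linear_combination ha
  | cast i =>
    rcases eq_or_ne i v with rfl | hi
    · simp only [Pi.sub_apply, Pi.single_eq_same, Pi.one_apply, Fin.snoc_castSucc, Pi.add_apply,
        Pi.smul_apply, smul_eq_mul]
      linear_combination -ha
    · simp [hi]

theorem fiedler_stmt_13_general {n : ℕ} (hn : 2 ≤ n) {G : SimpleGraph (Fin n)}
    [DecidableRel G.Adj] {v : Fin n} (hv : G.IsUniversal v) {x a : ℝ}
    (ha : a ^ 2 - a * (2 * x + (n : ℝ) - 2) + ((n : ℝ) - 1) * (x - 1) = 0)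
    (hmin : ∀ a' : ℝ,
      a' ^ 2 - a' * (2 * x + (n : ℝ) - 2) + ((n : ℝ) - 1) * (x - 1) = 0 → a ≤ a') :
    (pendantVector v a ≠ 0 ∧
      pertLap n G v x *ᵥ pendantVector v a = (a + 1) • pendantVector v a) ∧
    (∑ i, pendantVector v a i = 0) ∧
    pendantVector v a v.castSucc < pendantVector v a (Fin.last n) := by
  have hn' : (2 : ℝ) ≤ n := mod_cast hn
  have hneg : (((n : ℝ) - 1) / 2) ^ 2 - ((n : ℝ) - 1) / 2 * (2 * x + (n : ℝ) - 2) +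
      ((n : ℝ) - 1) * (x - 1) < 0 := by nlinarith
  have ha_lt : a < ((n : ℝ) - 1) / 2 := lt_of_monic_quadratic_neg ha hmin hneg
  have hlt : pendantVector v a v.castSucc < pendantVector v a (Fin.last n) := by
    simp only [pendantVector_eq_snoc, Fin.snoc_castSucc, Fin.snoc_last, Pi.sub_apply,
      Pi.single_eq_same, Pi.one_apply]
    linarith
  have hne : pendantVector v a ≠ 0 := fun h ↦ by simp [h] at hlt
  exact ⟨⟨hne, pertLap_mulVec_pendantVector hv ha⟩, sum_pendantVector v a, hlt⟩

/-- For the complete graph `Kₙ` (`n ≥ 2`) with a pendant vertex attached to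
the vertex of index `n-1` (vertex `n` in 1-based labelling) by an edge of weight `x > 0`, let
`a` be the smaller root of `p_x(a) = a² - a(2x + n - 2) + (n-1)(x-1)` and
`Φ = (-1, …, -1, a, n - 1 - a)`. Then `Φ` is an eigenvector of `L̃(x)` with eigenvalue `a + 1`,
its entries sum to zero, and the pendant vertex carries a strictly larger value than the
attachment vertex: `Φ(n+1) > Φ(n)`. -/
theorem fiedler_stmt_13 (n : ℕ) (hn : 2 ≤ n) (x : ℝ) (hx : 0 < x) (a : ℝ)
    (ha : a ^ 2 - a * (2 * x + (n : ℝ) - 2) + ((n : ℝ) - 1) * (x - 1) = 0)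
    (hmin : ∀ a' : ℝ,
      a' ^ 2 - a' * (2 * x + (n : ℝ) - 2) + ((n : ℝ) - 1) * (x - 1) = 0 → a ≤ a') :
    let Φ : Fin (n+1) → ℝ := fun i =>
      if i = Fin.last n then (n : ℝ) - 1 - a else if (i : ℕ) = n - 1 then a else -1
    (Φ ≠ 0 ∧ pertLap n ⊤ ⟨n - 1, by omega⟩ x *ᵥ Φ = (a + 1) • Φ) ∧
    (∑ i, Φ i = 0) ∧
    Φ (Fin.castSucc ⟨n - 1, by omega⟩) < Φ (Fin.last n) :=
  fiedler_stmt_13_general hn (v := ⟨n - 1, by omega⟩) SimpleGraph.IsUniversal.top ha hmin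
end
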